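/- For every T > 0 and every ε ∈ (0, 3/8) there exists a constant C = C(T,ε) > 0, independent of n and m, such that for all integers n ≥ 2 and m ≥ 1, with τ = T/m and t_i = iτ, for all x ∈ (0,π) and all i ∈ {1,…,m}: ∫₀^{t_i} ∫₀^π |G^{n,τ}_{s+τ}(x,y) - G^n_s(x,y)|² dy ds ≤ C τ^{3/4 - ε}, and ∫₀^{t_i} ∫₀^π |Δ_nG^{n,τ}_{s+τ}(x,y) - Δ_nG^n_s(x,y)| dy ds ≤ C τ^{3/8 - ε}. -/

import Mathlib

noncomputable section

open Real intervalIntegral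

/-- The Dirichlet eigenfunctions `φ_j(x) = √(2/π) sin(jx)` on `(0,π)`. -/
def phiF (j : ℕ) (x : ℝ) : ℝ := Real.sqrt (2 / Real.pi) * Real.sin (j * x)

/-- The Green function of `∂_t + Δ²` with Dirichlet boundary conditions on `(0,π)`:
`G_t(x,y) = Σ_{j≥1} e^{-j⁴ t} φ_j(x) φ_j(y)`. -/
def GF (t x y : ℝ) : ℝ :=
  ∑' j : ℕ, Real.exp (-((j : ℝ) + 1) ^ 4 * t) * phiF (j + 1) x * phiF (j + 1) y

/-- `ΔG_t(x,y) = -Σ_{j≥1} j² e^{-j⁴ t} φ_j(x) φ_j(y)`. -/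
def DGF (t x y : ℝ) : ℝ :=
  -∑' j : ℕ, ((j : ℝ) + 1) ^ 2 * Real.exp (-((j : ℝ) + 1) ^ 4 * t) * phiF (j + 1) x * phiF (j + 1) y

/-- The grid projection `κ_n(y) = h⌊y/h⌋` with `h = π/n`. -/
def kap (n : ℕ) (y : ℝ) : ℝ := (Real.pi / n) * ⌊y / (Real.pi / n)⌋

/-- The eigenvalue `λ_{j,n} = -(4n²/π²) sin²(jπ/(2n))` of the discrete Dirichlet Laplacian. -/
def lamEig (j n : ℕ) : ℝ :=
  -(4 * (n : ℝ) ^ 2 / Real.pi ^ 2) * Real.sin ((j : ℝ) * Real.pi / (2 * n)) ^ 2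

/-- The piecewise-linear interpolant `φ_{j,n}` of `φ_j` on the grid `{0, h, …, π}`. -/
def phiIn (n j : ℕ) (x : ℝ) : ℝ :=
  phiF j (kap n x)
    + ((n : ℝ) / Real.pi) * (x - kap n x) * (phiF j (kap n x + Real.pi / n) - phiF j (kap n x))

/-- The spatially discrete Green function
`G^n_t(x,y) = Σ_{j=1}^{n-1} e^{-λ_{j,n}² t} φ_{j,n}(x) φ_j(κ_n(y))`. -/
def Gn (n : ℕ) (t x y : ℝ) : ℝ :=
  ∑ j ∈ Finset.range (n - 1),
    Real.exp (-(lamEig (j + 1) n) ^ 2 * t) * phiIn n (j + 1) x * phiF (j + 1) (kap n y)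

/-- `Δ_nG^n_t(x,y) = Σ_{j=1}^{n-1} λ_{j,n} e^{-λ_{j,n}² t} φ_{j,n}(x) φ_j(κ_n(y))`. -/
def DGn (n : ℕ) (t x y : ℝ) : ℝ :=
  ∑ j ∈ Finset.range (n - 1),
    lamEig (j + 1) n * Real.exp (-(lamEig (j + 1) n) ^ 2 * t)
      * phiIn n (j + 1) x * phiF (j + 1) (kap n y)

/-- The fully discrete Green function
`G^{n,τ}_t(x,y) = Σ_{j=1}^{n-1} (1 + τλ_{j,n}²)^{-⌊t/τ⌋} φ_{j,n}(x) φ_j(κ_n(y))`. -/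
def Gnt (n : ℕ) (τ t x y : ℝ) : ℝ :=
  ∑ j ∈ Finset.range (n - 1),
    ((1 + τ * (lamEig (j + 1) n) ^ 2) ^ (⌊t / τ⌋₊))⁻¹ * phiIn n (j + 1) x * phiF (j + 1) (kap n y)

/-- `Δ_nG^{n,τ}_t(x,y) = Σ_{j=1}^{n-1} λ_{j,n} (1 + τλ_{j,n}²)^{-⌊t/τ⌋} φ_{j,n}(x) φ_j(κ_n(y))`. -/
def DGnt (n : ℕ) (τ t x y : ℝ) : ℝ :=
  ∑ j ∈ Finset.range (n - 1),
    lamEig (j + 1) n * ((1 + τ * (lamEig (j + 1) n) ^ 2) ^ (⌊t / τ⌋₊))⁻¹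
      * phiIn n (j + 1) x * phiF (j + 1) (kap n y)


lemma aux_cos_sum (θ : ℝ) (N : ℕ) :
    2 * sin (θ / 2) * ∑ l ∈ Finset.range N, cos (l * θ) = sin (N * θ - θ / 2) + sin (θ / 2) := by
  induction N with
  | zero => simp
  | succ N ih =>
    rw [Finset.sum_range_succ, mul_add, ih]
    have h1 : ((N + 1 : ℕ) : ℝ) * θ - θ / 2 = N * θ + θ / 2 := by push_cast; ring
    rw [h1, sin_add, sin_sub]; ring

lemma aux_cos_sum2 (n : ℕ) (hn : 0 < n) (m : ℤ) (h1 : m ≠ 0) (h2 : |m| < 2 * n) :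
    ∑ l ∈ Finset.range n, cos (l * (m * (π / n))) = (1 - (-1) ^ m) / 2 := by
  have hn' : (0 : ℝ) < n := by exact_mod_cast hn
  have h := aux_cos_sum (m * (π / n)) n
  have hs : sin (m * (π / n) / 2) ≠ 0 := by
    intro h0
    rw [Real.sin_eq_zero_iff] at h0
    obtain ⟨k, hk⟩ := h0
    have h3 : (m : ℝ) = 2 * n * k := by
      field_simp at hk
      have := pi_pos
      nlinarith
    have h4 : m = 2 * n * k := by exact_mod_cast h3
    have hk0 : k ≠ 0 := by rintro rfl; simp at h4; exact h1 h4
    have : 1 ≤ |k| := Int.one_le_abs hk0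
    rw [h4, abs_mul] at h2
    have h5 : |(2 * n : ℤ)| = 2 * n := abs_of_nonneg (by positivity)
    rw [h5] at h2
    nlinarith
  have h6 : (n : ℝ) * (m * (π / n)) - m * (π / n) / 2 = m * π - m * (π / n) / 2 := by
    field_simp
  rw [h6, sin_sub, Real.sin_int_mul_pi, Real.cos_int_mul_pi] at h
  have : 2 * sin (m * (π / n) / 2) * (∑ l ∈ Finset.range n, cos (l * (m * (π / n))) - (1 - (-1) ^ m) / 2) = 0 := by
    rw [mul_sub, h]; ring
  rcases mul_eq_zero.1 this with h7 | h7
  · exfalso; apply hs; linarith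
  · linarith

lemma aux_orth (n : ℕ) (hn : 0 < n) (j k : ℕ) (hj : 1 ≤ j) (hj' : j < n) (hk : 1 ≤ k) (hk' : k < n) :
    ∑ l ∈ Finset.range n, sin (j * (π / n * l)) * sin (k * (π / n * l))
      = if j = k then (n : ℝ) / 2 else 0 := by
  have e : ∀ l : ℕ, sin (j * (π / n * l)) * sin (k * (π / n * l))
      = (cos (l * (((j : ℤ) - k : ℤ) * (π / n))) - cos (l * (((j : ℤ) + k : ℤ) * (π / n)))) / 2 := by
    intro l
    have e1 : (l : ℝ) * (((j : ℤ) - k : ℤ) * (π / n)) = j * (π / n * l) - k * (π / n * l) := by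
      push_cast; ring
    have e2 : (l : ℝ) * (((j : ℤ) + k : ℤ) * (π / n)) = j * (π / n * l) + k * (π / n * l) := by
      push_cast; ring
    rw [e1, e2, cos_sub, cos_add]; ring
  rw [Finset.sum_congr rfl (fun l _ => e l), ← Finset.sum_div, Finset.sum_sub_distrib,
    aux_cos_sum2 n hn ((j : ℤ) + k) (by omega) (by rw [abs_of_nonneg (by positivity)]; omega)]
  split_ifs with h
  · subst h
    have : ((-1 : ℝ)) ^ ((j : ℤ) + j) = 1 := Even.neg_one_zpow ⟨j, rfl⟩
    rw [this]; simp
  · rw [aux_cos_sum2 n hn ((j : ℤ) - k) (by omega) (by rw [abs_lt]; omega)]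
    have : ((-1 : ℝ)) ^ ((j : ℤ) + k) = (-1) ^ ((j : ℤ) - k) := by
      have h2 : (j : ℤ) + k = (j - k) + (k + k) := by ring
      rw [h2, zpow_add₀ (by norm_num), Even.neg_one_zpow (n := (k + k : ℤ)) ⟨k, rfl⟩, mul_one]
    rw [this]; simp

lemma aux_parseval (n : ℕ) (hn : 0 < n) (a : ℕ → ℝ) :
    ∑ l ∈ Finset.range n, (∑ j ∈ Finset.range (n - 1), a j * sin ((j + 1 : ℕ) * (π / n * l))) ^ 2
      = n / 2 * ∑ j ∈ Finset.range (n - 1), a j ^ 2 := by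
  have e : ∀ l ∈ Finset.range n, (∑ j ∈ Finset.range (n - 1), a j * sin ((j + 1 : ℕ) * (π / n * l))) ^ 2
     = ∑ j ∈ Finset.range (n - 1), ∑ k ∈ Finset.range (n - 1), a j * a k *
        (sin ((j + 1 : ℕ) * (π / n * l)) * sin ((k + 1 : ℕ) * (π / n * l))) := by
    intro l _
    rw [sq, Finset.sum_mul_sum]
    refine Finset.sum_congr rfl fun j _ => Finset.sum_congr rfl fun k _ => by ring
  rw [Finset.sum_congr rfl e, Finset.sum_comm, Finset.mul_sum]
  refine Finset.sum_congr rfl fun j hj => ?_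
  rw [Finset.sum_comm]
  rw [Finset.mem_range] at hj
  have e2 : ∀ k ∈ Finset.range (n - 1), ∑ l ∈ Finset.range n, a j * a k *
        (sin ((j + 1 : ℕ) * (π / n * l)) * sin ((k + 1 : ℕ) * (π / n * l)))
      = if j = k then a j * a k * (n / 2) else 0 := by
    intro k hk
    rw [Finset.mem_range] at hk
    rw [← Finset.mul_sum, aux_orth n hn (j + 1) (k + 1) (by omega) (by omega) (by omega) (by omega)]
    simp
  rw [Finset.sum_congr rfl e2, Finset.sum_ite_eq, if_pos (Finset.mem_range.2 hj)]
  ring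

/-- Integral of a grid function. -/
lemma aux_step (n : ℕ) (hn : 0 < n) (F : ℝ → ℝ) :
    ∫ y in (0:ℝ)..π, F (kap n y) = π / n * ∑ l ∈ Finset.range n, F (π / n * l) := by
  have hn' : (0 : ℝ) < n := by exact_mod_cast hn
  have hh : 0 < π / n := by positivity
  have hc : ∀ l : ℕ, ∀ y ∈ Set.Ioo (π / n * l) (π / n * (l + 1 : ℕ)), F (kap n y) = F (π / n * l) := by
    intro l y hy
    have : ⌊y / (π / n)⌋ = (l : ℤ) := by
      rw [Int.floor_eq_iff]
      constructor
      · rw [le_div_iff₀ hh]; have := hy.1; push_cast; linarith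
      · rw [div_lt_iff₀ hh]; have := hy.2; push_cast at *; linarith
    simp [kap, this]
  have hle : ∀ l : ℕ, π / n * l ≤ π / n * (l + 1 : ℕ) := by
    intro l; push_cast; nlinarith
  have hae : ∀ l : ℕ, ∀ᵐ y : ℝ, y ∈ Set.uIoc (π / n * l) (π / n * (l + 1 : ℕ)) →
      F (π / n * l) = F (kap n y) := by
    intro l
    have h1 : ∀ᵐ y : ℝ, y ≠ π / n * (l + 1 : ℕ) := by
      simp [MeasureTheory.ae_iff]
    filter_upwards [h1] with y hy hy2
    rw [Set.uIoc_of_le (hle l)] at hy2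
    exact (hc l y ⟨hy2.1, lt_of_le_of_ne hy2.2 hy⟩).symm
  have hint : ∀ l < n, IntervalIntegrable (fun y => F (kap n y)) MeasureTheory.volume
      (π / n * l) (π / n * (l + 1 : ℕ)) := by
    intro l _
    refine (intervalIntegrable_const (c := F (π / n * l))).congr_ae ?_
    rw [Filter.EventuallyEq, MeasureTheory.ae_restrict_iff' measurableSet_uIoc]
    exact hae l
  have := intervalIntegral.sum_integral_adjacent_intervals (a := fun l : ℕ => π / n * l) hint
  have e : π / n * (n : ℝ) = π := by field_simp
  simp only [e, Nat.cast_zero, mul_zero] at this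
  rw [← this, Finset.mul_sum]
  refine Finset.sum_congr rfl fun l _ => ?_
  rw [← intervalIntegral.integral_congr_ae (hae l), intervalIntegral.integral_const]
  simp only [smul_eq_mul]; push_cast; ring

lemma aux_phiIn (n j : ℕ) (hn : 0 < n) (x : ℝ) : phiIn n j x ^ 2 ≤ 2 / π := by
  have hn' : (0 : ℝ) < n := by exact_mod_cast hn
  have hp := pi_pos
  have hh : 0 < π / n := by positivity
  set w := (n : ℝ) / π * (x - kap n x) with hw
  have e : w = Int.fract (x / (π / n)) := by
    rw [hw, Int.fract, kap]; field_simp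
  have w0 : 0 ≤ w := e ▸ Int.fract_nonneg _
  have w1 : w ≤ 1 := e ▸ (Int.fract_lt_one _).le
  have hs : √(2 / π) ^ 2 = 2 / π := Real.sq_sqrt (by positivity)
  have : phiIn n j x = √(2 / π) * ((1 - w) * sin (j * kap n x) + w * sin (j * (kap n x + π / n))) := by
    rw [phiIn, ← hw, phiF, phiF]; ring
  rw [this, mul_pow, hs]
  have h2 : ((1 - w) * sin (j * kap n x) + w * sin (j * (kap n x + π / n))) ^ 2 ≤ 1 := by
    rw [sq_le_one_iff_abs_le_one, abs_le]
    have a1 := neg_one_le_sin (j * kap n x)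
    have a2 := sin_le_one (j * kap n x)
    have b1 := neg_one_le_sin (j * (kap n x + π / n))
    have b2 := sin_le_one (j * (kap n x + π / n))
    constructor <;> nlinarith
  have : 0 ≤ 2 / π := by positivity
  nlinarith

lemma aux_bess (n : ℕ) (hn : 0 < n) (d : ℕ → ℝ) (x : ℝ) :
    π / n * ∑ l ∈ Finset.range n, (∑ j ∈ Finset.range (n - 1),
      d j * phiIn n (j + 1) x * phiF (j + 1) (π / n * l)) ^ 2 ≤ ∑ j ∈ Finset.range (n - 1), d j ^ 2 := by
  have hn' : (0 : ℝ) < n := by exact_mod_cast hn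
  have hp := pi_pos
  have hs : √(2 / π) ^ 2 = 2 / π := Real.sq_sqrt (by positivity)
  have h := aux_parseval n hn (fun j => d j * phiIn n (j + 1) x * √(2 / π))
  have e : ∀ l : ℕ, ∑ j ∈ Finset.range (n - 1), d j * phiIn n (j + 1) x * phiF (j + 1) (π / n * l)
     = ∑ j ∈ Finset.range (n - 1), d j * phiIn n (j + 1) x * √(2 / π) * sin ((j + 1 : ℕ) * (π / n * l)) := by
    intro l
    refine Finset.sum_congr rfl fun j _ => ?_
    rw [phiF]; ring
  simp only [e]
  rw [h, ← mul_assoc, Finset.mul_sum]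
  refine Finset.sum_le_sum fun j _ => ?_
  have h1 := aux_phiIn n (j + 1) hn x
  have e2 : π / n * (n / 2) * (d j * phiIn n (j + 1) x * √(2 / π)) ^ 2 = d j ^ 2 * phiIn n (j + 1) x ^ 2 := by
    rw [mul_pow, hs]; field_simp
  rw [e2]
  have : 2 / π ≤ 1 := by rw [div_le_one hp]; linarith [pi_gt_three]
  nlinarith [sq_nonneg (d j)]

lemma aux_L2 (n : ℕ) (hn : 0 < n) (d : ℕ → ℝ) (x : ℝ) :
    ∫ y in (0:ℝ)..π, (∑ j ∈ Finset.range (n - 1), d j * phiIn n (j + 1) x * phiF (j + 1) (kap n y)) ^ 2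
      ≤ ∑ j ∈ Finset.range (n - 1), d j ^ 2 := by
  rw [aux_step n hn (fun z => (∑ j ∈ Finset.range (n - 1), d j * phiIn n (j + 1) x * phiF (j + 1) z) ^ 2)]
  exact aux_bess n hn d x

lemma aux_L1 (n : ℕ) (hn : 0 < n) (d : ℕ → ℝ) (x : ℝ) :
    ∫ y in (0:ℝ)..π, |∑ j ∈ Finset.range (n - 1), d j * phiIn n (j + 1) x * phiF (j + 1) (kap n y)|
      ≤ √(π * ∑ j ∈ Finset.range (n - 1), d j ^ 2) := by
  have hn' : (0 : ℝ) < n := by exact_mod_cast hn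
  have hp := pi_pos
  rw [aux_step n hn (fun z => |∑ j ∈ Finset.range (n - 1), d j * phiIn n (j + 1) x * phiF (j + 1) z|)]
  apply Real.le_sqrt_of_sq_le
  refine le_trans ?_ (mul_le_mul_of_nonneg_left (aux_bess n hn d x) hp.le)
  have h := sq_sum_le_card_mul_sum_sq (s := Finset.range n)
    (f := fun l : ℕ => |∑ j ∈ Finset.range (n - 1), d j * phiIn n (j + 1) x * phiF (j + 1) (π / n * l)|)
  simp only [sq_abs, Finset.card_range] at h
  rw [mul_pow]
  refine (mul_le_mul_of_nonneg_left h (by positivity)).trans (le_of_eq ?_)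
  field_simp

lemma aux_geom (w : ℝ) (h0 : 0 ≤ w) (h1 : w ≤ 1) (k : ℕ) : (k + 1) * w ^ k * (1 - w) ≤ 1 := by
  have h := geom_sum_mul_neg w (k + 1)
  have h2 : (k + 1) * w ^ k ≤ ∑ i ∈ Finset.range (k + 1), w ^ i := by
    have : ∑ i ∈ Finset.range (k + 1), w ^ k = (k + 1) * w ^ k := by simp
    rw [← this]
    refine Finset.sum_le_sum fun i hi => pow_le_pow_of_le_one h0 h1 ?_
    rw [Finset.mem_range] at hi; omega
  have h3 : 0 ≤ w ^ (k + 1) := by positivity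
  nlinarith

lemma aux_powdiff (p q : ℝ) (hq : 0 ≤ q) (hpq : q ≤ p) (k : ℕ) :
    p ^ (k + 1) - q ^ (k + 1) ≤ (k + 1) * p ^ k * (p - q) := by
  have h := geom_sum₂_mul p q (k + 1)
  rw [← h]
  refine mul_le_mul_of_nonneg_right ?_ (by linarith)
  have : ∑ i ∈ Finset.range (k + 1), p ^ k = (k + 1) * p ^ k := by simp
  rw [← this]
  refine Finset.sum_le_sum fun i hi => ?_
  rw [Finset.mem_range] at hi
  calc p ^ i * q ^ (k + 1 - 1 - i) ≤ p ^ i * p ^ (k + 1 - 1 - i) := by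
        gcongr; exact pow_nonneg (hq.trans hpq) _
    _ = p ^ k := by rw [← pow_add]; congr 1; omega

/-- backward Euler rational approximation error -/
lemma aux_euler (z : ℝ) (hz : 0 ≤ z) (k : ℕ) :
    ((1 + z) ^ (k + 1))⁻¹ - exp (-z) ^ (k + 1) ≤ 8 / (k + 1) := by
  set p := (1 + z)⁻¹ with hp
  have hz1 : 0 < 1 + z := by linarith
  have hp0 : 0 < p := by positivity
  have hp1 : p ≤ 1 := inv_le_one_of_one_le₀ (by linarith)
  have hpz : p * (1 + z) = 1 := inv_mul_cancel₀ hz1.ne'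
  have hqp : exp (-z) ≤ p := by
    rw [hp, exp_neg]; gcongr; linarith [add_one_le_exp z]
  have hq0 := exp_pos (-z)
  have hd : p - exp (-z) ≤ 2 * (1 - p) ^ 2 := by
    have h1 : 1 - p = p * z := by linarith
    rcases le_total z 1 with h | h
    · have h2 := add_one_le_exp (-z)
      have h3 : p - exp (-z) ≤ p * z ^ 2 := by nlinarith
      have h4 : 1 / 2 ≤ p := by nlinarith
      rw [h1]
      nlinarith [mul_nonneg hp0.le (sq_nonneg z)]
    · have h4 : p ≤ 1 / 2 := by nlinarith
      nlinarith
  rw [← inv_pow, ← hp]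
  have h1 := aux_powdiff p (exp (-z)) hq0.le hqp k
  set j := k / 2 with hj
  have h2 := aux_geom p hp0.le hp1 j
  have hjk : (k + 1 : ℝ) ≤ 2 * (j + 1) := by
    have : k + 1 ≤ 2 * (j + 1) := by omega
    exact_mod_cast this
  have h3 : (k + 1) * (p ^ j * (1 - p)) ≤ 2 := by
    have : 0 ≤ p ^ j * (1 - p) := mul_nonneg (by positivity) (by linarith)
    nlinarith
  have h3' : 0 ≤ (k + 1) * (p ^ j * (1 - p)) := by
    have : 0 ≤ 1 - p := by linarith
    positivity
  have h4 : p ^ k ≤ p ^ j * p ^ j := by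
    rw [← pow_add]; exact pow_le_pow_of_le_one hp0.le hp1 (by omega)
  rw [le_div_iff₀ (by positivity)]
  have hk : (0:ℝ) ≤ k + 1 := by positivity
  calc (p ^ (k + 1) - exp (-z) ^ (k + 1)) * (k + 1) ≤ (k + 1) * p ^ k * (p - exp (-z)) * (k + 1) := by gcongr
    _ ≤ (k + 1) * (p ^ j * p ^ j) * (2 * (1 - p) ^ 2) * (k + 1) := by
        gcongr
    _ = 2 * ((k + 1) * (p ^ j * (1 - p))) ^ 2 := by ring
    _ ≤ 8 := by nlinarith

lemma aux_A (τ μ s : ℝ) (hτ : 0 < τ) (hμ : 0 < μ) (hs : 0 < s) :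
    |((1 + τ * μ) ^ ⌊(s + τ) / τ⌋₊)⁻¹ - exp (-μ * s)| ≤ 1 ∧
    |((1 + τ * μ) ^ ⌊(s + τ) / τ⌋₊)⁻¹ - exp (-μ * s)| ≤ 8 * (τ / s) ∧
    |((1 + τ * μ) ^ ⌊(s + τ) / τ⌋₊)⁻¹ - exp (-μ * s)| ≤ 1 / (μ * s) := by
  obtain ⟨k, hk⟩ : ∃ k, ⌊(s + τ) / τ⌋₊ = k + 1 := by
    refine Nat.exists_eq_succ_of_ne_zero ?_
    have : 1 ≤ ⌊(s + τ) / τ⌋₊ := Nat.le_floor (by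
      rw [le_div_iff₀ hτ]; push_cast; linarith)
    omega
  have hk1 : k * τ ≤ s := by
    have := Nat.floor_le (a := (s + τ) / τ) (by positivity)
    rw [hk, le_div_iff₀ hτ] at this; push_cast at this; linarith
  have hk2 : s ≤ (k + 1) * τ := by
    have := Nat.lt_floor_add_one ((s + τ) / τ)
    rw [hk, div_lt_iff₀ hτ] at this; push_cast at this; linarith
  rw [hk]
  set z := τ * μ with hz
  have hz0 : 0 < z := by positivity
  set r := ((1 + z) ^ (k + 1))⁻¹ with hr
  have hr0 : 0 < r := by positivity
  have hr1 : r ≤ 1 := inv_le_one_of_one_le₀ (one_le_pow₀ (by linarith))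
  have he0 := exp_pos (-μ * s)
  have he1 : exp (-μ * s) ≤ 1 := by rw [exp_le_one_iff]; nlinarith
  have hms : 0 < μ * s := by positivity
  have hrb : r ≤ 1 / (μ * s) := by
    rw [hr, one_div]; gcongr
    have := one_add_mul_le_pow (a := z) (by linarith) (k + 1)
    push_cast at this
    nlinarith
  have heb : exp (-μ * s) ≤ 1 / (μ * s) := by
    rw [neg_mul, exp_neg, one_div]; gcongr
    linarith [add_one_le_exp (μ * s)]
  refine ⟨by rw [abs_le]; constructor <;> linarith, ?_, by rw [abs_le]; constructor <;> linarith⟩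
  have hk3 : 8 / ((k : ℝ) + 1) ≤ 8 * (τ / s) := by
    rw [← mul_div_assoc, div_le_div_iff₀ (by positivity) hs]; nlinarith
  refine le_trans ?_ hk3
  have h1 := aux_euler z hz0.le k
  have hq1 : exp (-z) ≤ 1 := by rw [exp_le_one_iff]; linarith
  have e1 : exp (-z) ^ (k + 1) ≤ exp (-μ * s) := by
    rw [← exp_nat_mul, exp_le_exp]; push_cast; nlinarith
  have e2 : exp (-μ * s) ≤ exp (-z) ^ k := by
    rw [← exp_nat_mul, exp_le_exp]; nlinarith
  have e3 : exp (-z) ^ (k + 1) ≤ r := by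
    rw [hr, ← inv_pow]
    refine pow_le_pow_left₀ (exp_pos _).le ?_ _
    rw [exp_neg]; gcongr; linarith [add_one_le_exp z]
  have h2 := aux_geom (exp (-z)) (exp_pos _).le hq1 k
  have h3 : exp (-z) ^ k - exp (-z) ^ (k + 1) ≤ 8 / (k + 1) := by
    rw [le_div_iff₀ (by positivity), pow_succ]; nlinarith
  rw [abs_le]; constructor <;> linarith

lemma aux_interp (A a b β γ : ℝ) (hA : 0 ≤ A) (ha : 0 < a) (hb : 0 < b) (hβ : 0 ≤ β) (hγ : 0 ≤ γ)
    (h1 : β + γ ≤ 1) (hA1 : A ≤ 1) (hAa : A ≤ 8 * a) (hAb : A ≤ b) : A ≤ 8 * (a ^ β * b ^ γ) := by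
  rcases hA.eq_or_lt with h | h
  · rw [← h]; positivity
  have e : A = A ^ β * A ^ γ * A ^ (1 - β - γ) := by
    rw [← rpow_add h, ← rpow_add h]
    ring_nf
    simp
  have k1 : A ^ β ≤ (8 * a) ^ β := rpow_le_rpow hA hAa hβ
  have k2 : A ^ γ ≤ b ^ γ := rpow_le_rpow hA hAb hγ
  have k3 : A ^ (1 - β - γ) ≤ 1 := rpow_le_one hA hA1 (by linarith)
  have k4 : (8:ℝ) ^ β ≤ 8 := by
    calc (8:ℝ) ^ β ≤ 8 ^ (1:ℝ) := rpow_le_rpow_of_exponent_le (by norm_num) (by linarith)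
      _ = 8 := by simp
  calc A = A ^ β * A ^ γ * A ^ (1 - β - γ) := e
    _ ≤ (8 * a) ^ β * b ^ γ * 1 := by gcongr
    _ = 8 ^ β * (a ^ β * b ^ γ) := by rw [mul_rpow (by norm_num) ha.le]; ring
    _ ≤ 8 * (a ^ β * b ^ γ) := by gcongr

/-- squared pointwise bound -/
lemma aux_A2 (τ μ s β γ : ℝ) (hτ : 0 < τ) (hμ : 0 < μ) (hs : 0 < s) (hβ : 0 ≤ β) (hγ : 0 ≤ γ)
    (h1 : β + γ ≤ 1) :
    (((1 + τ * μ) ^ ⌊(s + τ) / τ⌋₊)⁻¹ - exp (-μ * s)) ^ 2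
      ≤ 64 * τ ^ (2 * β) * s ^ (-(2 * β + 2 * γ)) * μ ^ (-(2 * γ)) := by
  obtain ⟨h2, h3, h4⟩ := aux_A τ μ s hτ hμ hs
  have h := aux_interp _ (τ / s) (1 / (μ * s)) β γ (abs_nonneg _) (by positivity) (by positivity) hβ hγ h1 h2 h3 h4
  have hsq := pow_le_pow_left₀ (abs_nonneg _) h 2
  rw [sq_abs] at hsq
  refine hsq.trans (le_of_eq ?_)
  have e1 : ∀ u v : ℝ, 0 < u → (u ^ v) ^ 2 = u ^ (2 * v) := by
    intro u v hu
    rw [← rpow_natCast, ← rpow_mul hu.le]; congr 1; push_cast; ring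
  rw [mul_pow, mul_pow, e1 _ _ (by positivity), e1 _ _ (by positivity), div_rpow hτ.le hs.le,
    one_div, inv_rpow (by positivity), mul_rpow hμ.le hs.le, rpow_neg hs.le, rpow_neg hμ.le, rpow_add hs]
  field_simp
  norm_num

lemma aux_lam (j n : ℕ) (hn : 0 < n) (hj : j < n) :
    ((j : ℝ)) ^ 4 / 16 ≤ lamEig j n ^ 2 := by
  have hn' : (0 : ℝ) < n := by exact_mod_cast hn
  have hj' : (j : ℝ) ≤ n := by exact_mod_cast hj.le
  have hp := pi_pos
  have h1 : 2 / π * ((j : ℝ) * π / (2 * n)) ≤ sin ((j : ℝ) * π / (2 * n)) := by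
    apply mul_le_sin (by positivity)
    rw [div_le_div_iff₀ (by positivity) (by norm_num)]
    nlinarith
  have e : 2 / π * ((j : ℝ) * π / (2 * n)) = j / n := by field_simp
  rw [e] at h1
  have h2 : ((j : ℝ) / n) ^ 2 ≤ sin ((j : ℝ) * π / (2 * n)) ^ 2 := by gcongr
  have h3 : (j : ℝ) ^ 2 / 4 ≤ 4 * (n : ℝ) ^ 2 / π ^ 2 * sin ((j : ℝ) * π / (2 * n)) ^ 2 := by
    calc (j : ℝ) ^ 2 / 4 ≤ 4 * (j : ℝ) ^ 2 / π ^ 2 := by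
          rw [div_le_div_iff₀ (by norm_num) (by positivity)]
          have : π ^ 2 ≤ 16 := by nlinarith [pi_le_four]
          nlinarith [sq_nonneg (j : ℝ)]
      _ = 4 * (n : ℝ) ^ 2 / π ^ 2 * ((j : ℝ) / n) ^ 2 := by field_simp
      _ ≤ _ := by gcongr
  have h4 := pow_le_pow_left₀ (by positivity) h3 2
  rw [lamEig]
  calc (j : ℝ) ^ 4 / 16 = ((j : ℝ) ^ 2 / 4) ^ 2 := by ring
    _ ≤ _ := h4
    _ = _ := by ring

lemma aux_summable (p : ℝ) (hp : 1 / 4 < p) :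
    Summable (fun j : ℕ => ((((j + 1 : ℕ) : ℝ)) ^ 4 / 16) ^ (-p)) := by
  have h := (summable_nat_add_iff 1).2 (Real.summable_nat_rpow.2 (show -(4 * p) < -1 by linarith))
  refine (h.mul_left ((16:ℝ) ^ p)).congr fun j => ?_
  have hj : (0:ℝ) < ((j + 1 : ℕ) : ℝ) := by positivity
  rw [div_rpow (by positivity) (by norm_num), ← rpow_natCast, ← rpow_mul hj.le, rpow_neg (by norm_num : (0:ℝ) ≤ 16)]
  rw [div_inv_eq_mul, mul_comm]; congr 2; push_cast; ring

lemma aux_sum (p : ℝ) (hp : 1 / 4 < p) (n : ℕ) :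
    ∑ j ∈ Finset.range (n - 1), (lamEig (j + 1) n ^ 2) ^ (-p)
      ≤ ∑' j : ℕ, ((((j + 1 : ℕ) : ℝ)) ^ 4 / 16) ^ (-p) := by
  refine le_trans ?_ ((aux_summable p hp).sum_le_tsum (Finset.range (n - 1)) fun j _ => by positivity)
  refine Finset.sum_le_sum fun j hj => ?_
  rw [Finset.mem_range] at hj
  exact rpow_le_rpow_of_nonpos (by positivity) (aux_lam (j + 1) n (by omega) (by omega)) (by linarith)

lemma aux_time (f : ℝ → ℝ) (D δ t T : ℝ) (hD : 0 ≤ D) (hδ : 0 < δ) (ht : 0 ≤ t) (htT : t ≤ T)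
    (hf0 : ∀ s, 0 < s → 0 ≤ f s) (hf : ∀ s, 0 < s → f s ≤ D * s ^ (δ - 1)) :
    ∫ s in (0:ℝ)..t, f s ≤ D * (T ^ δ / δ) := by
  have h1 : IntervalIntegrable (fun s : ℝ => D * s ^ (δ - 1)) MeasureTheory.volume 0 t :=
    (intervalIntegral.intervalIntegrable_rpow' (by linarith)).const_mul D
  have h := intervalIntegral.norm_integral_le_of_norm_le (f := f) ht (g := fun s : ℝ => D * s ^ (δ - 1))
    (Filter.Eventually.of_forall fun s hs => by
      rw [Real.norm_of_nonneg (hf0 s hs.1)]; exact hf s hs.1) h1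
  refine (le_abs_self _).trans (h.trans ?_)
  rw [intervalIntegral.integral_const_mul, integral_rpow (Or.inl (by linarith))]
  have e : δ - 1 + 1 = δ := by ring
  rw [e, zero_rpow hδ.ne', sub_zero]
  gcongr

theorem stmt17 (T ε : ℝ) (hT : 0 < T) (hε : ε ∈ Set.Ioo (0 : ℝ) (3 / 8)) :
    ∃ C : ℝ, 0 < C ∧ ∀ n : ℕ, 2 ≤ n → ∀ m : ℕ, 1 ≤ m →
      ∀ x ∈ Set.Ioo 0 Real.pi, ∀ i : ℕ, 1 ≤ i → i ≤ m →
        ((∫ s in (0:ℝ)..((i : ℝ) * (T / m)), ∫ y in (0:ℝ)..Real.pi,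
              (Gnt n (T / m) (s + T / m) x y - Gn n s x y) ^ 2)
            ≤ C * (T / m) ^ ((3 : ℝ) / 4 - ε))
        ∧ ((∫ s in (0:ℝ)..((i : ℝ) * (T / m)), ∫ y in (0:ℝ)..Real.pi,
              |DGnt n (T / m) (s + T / m) x y - DGn n s x y|)
            ≤ C * (T / m) ^ ((3 : ℝ) / 8 - ε)) := by
  obtain ⟨hε0, hε1⟩ := hε
  set K1 := ∑' j : ℕ, ((((j + 1 : ℕ) : ℝ)) ^ 4 / 16) ^ (-(1 / 4 + ε / 2)) with hK1
  set K2 := ∑' j : ℕ, ((((j + 1 : ℕ) : ℝ)) ^ 4 / 16) ^ (-(1 / 4 + ε)) with hK2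
  have hK1' : 0 ≤ K1 := tsum_nonneg fun j => by positivity
  have hK2' : 0 ≤ K2 := tsum_nonneg fun j => by positivity
  have hp := pi_pos
  have hE : 0 ≤ T ^ (ε / 2) / (ε / 2) := by positivity
  refine ⟨(64 * K1 + √(π * 64 * K2)) * (T ^ (ε / 2) / (ε / 2)) + 1, by positivity, ?_⟩
  intro n hn m hm x _ i hi him
  have hm' : (0:ℝ) < m := by exact_mod_cast hm
  set τ := T / m with hτ
  have hτ0 : 0 < τ := by positivity
  have hn0 : 0 < n := by omega
  have ht0 : 0 ≤ (i : ℝ) * τ := by positivity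
  have htT : (i : ℝ) * τ ≤ T := by
    have : (i : ℝ) ≤ m := by exact_mod_cast him
    calc (i : ℝ) * τ ≤ m * τ := by gcongr
      _ = T := by rw [hτ]; field_simp
  have hlam : ∀ j ∈ Finset.range (n - 1), 0 < lamEig (j + 1) n ^ 2 := by
    intro j hj
    rw [Finset.mem_range] at hj
    exact lt_of_lt_of_le (by positivity) (aux_lam (j + 1) n hn0 (by omega))
  constructor
  · have hb : ∀ s, 0 < s → ∫ y in (0:ℝ)..π, (Gnt n τ (s + τ) x y - Gn n s x y) ^ 2
        ≤ 64 * K1 * τ ^ (3 / 4 - ε) * s ^ (ε / 2 - 1) := by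
      intro s hs
      have e : ∀ y, Gnt n τ (s + τ) x y - Gn n s x y = ∑ j ∈ Finset.range (n - 1),
          (((1 + τ * lamEig (j + 1) n ^ 2) ^ ⌊(s + τ) / τ⌋₊)⁻¹ - exp (-lamEig (j + 1) n ^ 2 * s))
            * phiIn n (j + 1) x * phiF (j + 1) (kap n y) := by
        intro y
        rw [Gnt, Gn, ← Finset.sum_sub_distrib]
        refine Finset.sum_congr rfl fun j _ => by ring
      simp only [e]
      refine (aux_L2 n hn0 _ x).trans ?_
      calc _ ≤ ∑ j ∈ Finset.range (n - 1), 64 * τ ^ (3 / 4 - ε) * s ^ (ε / 2 - 1)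
              * (lamEig (j + 1) n ^ 2) ^ (-(1 / 4 + ε / 2)) := by
            refine Finset.sum_le_sum fun j hj => ?_
            have h := aux_A2 τ (lamEig (j + 1) n ^ 2) s (3 / 8 - ε / 2) (1 / 8 + ε / 4) hτ0 (hlam j hj) hs
              (by linarith) (by linarith) (by linarith)
            have e2 : 3 / 4 - ε = 2 * (3 / 8 - ε / 2) := by ring
            have e3 : (-(1 / 4 + ε / 2)) = -(2 * (1 / 8 + ε / 4)) := by ring
            have e4 : ε / 2 - 1 = -(2 * (3 / 8 - ε / 2) + 2 * (1 / 8 + ε / 4)) := by ring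
            rw [e2, e3, e4]
            exact h
        _ ≤ 64 * τ ^ (3 / 4 - ε) * s ^ (ε / 2 - 1) * K1 := by
            rw [← Finset.mul_sum]
            gcongr
            exact aux_sum _ (by linarith) n
        _ = _ := by ring
    have h := aux_time _ (64 * K1 * τ ^ (3 / 4 - ε)) (ε / 2) (i * τ) T (by positivity) (by linarith) ht0 htT
      (fun s _ => intervalIntegral.integral_nonneg hp.le fun y _ => sq_nonneg _) hb
    refine h.trans ?_
    have h0 : 0 ≤ τ ^ (3 / 4 - ε) := by positivity
    have h1 : 0 ≤ √(π * 64 * K2) * (T ^ (ε / 2) / (ε / 2)) := by positivity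
    nlinarith
  · have hb : ∀ s, 0 < s → ∫ y in (0:ℝ)..π, |DGnt n τ (s + τ) x y - DGn n s x y|
        ≤ √(π * 64 * K2) * τ ^ (3 / 8 - ε) * s ^ (ε / 2 - 1) := by
      intro s hs
      have e : ∀ y, DGnt n τ (s + τ) x y - DGn n s x y = ∑ j ∈ Finset.range (n - 1),
          (lamEig (j + 1) n *
          (((1 + τ * lamEig (j + 1) n ^ 2) ^ ⌊(s + τ) / τ⌋₊)⁻¹ - exp (-lamEig (j + 1) n ^ 2 * s)))
            * phiIn n (j + 1) x * phiF (j + 1) (kap n y) := by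
        intro y
        rw [DGnt, DGn, ← Finset.sum_sub_distrib]
        refine Finset.sum_congr rfl fun j _ => by ring
      simp only [e]
      refine (aux_L1 n hn0 _ x).trans ?_
      have e1 : ∀ u v : ℝ, 0 < u → (u ^ v) ^ 2 = u ^ (2 * v) := by
        intro u v hu
        rw [← rpow_natCast, ← rpow_mul hu.le]; congr 1; push_cast; ring
      rw [Real.sqrt_le_left (by positivity), mul_pow, mul_pow, Real.sq_sqrt (by positivity),
        e1 _ _ hτ0, e1 _ _ hs]
      calc _ ≤ π * ∑ j ∈ Finset.range (n - 1), 64 * τ ^ (2 * (3 / 8 - ε)) * s ^ (2 * (ε / 2 - 1))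
              * (lamEig (j + 1) n ^ 2) ^ (-(1 / 4 + ε)) := by
            gcongr with j hj
            have h := aux_A2 τ (lamEig (j + 1) n ^ 2) s (3 / 8 - ε) (5 / 8 + ε / 2) hτ0 (hlam j hj) hs
              (by linarith) (by linarith) (by linarith)
            have hl := hlam j hj
            rw [mul_pow]
            refine (mul_le_mul_of_nonneg_left h hl.le).trans (le_of_eq ?_)
            have e3 : (-(1 / 4 + ε)) = -(2 * (5 / 8 + ε / 2)) + 1 := by ring
            have e4 : 2 * (ε / 2 - 1) = -(2 * (3 / 8 - ε) + 2 * (5 / 8 + ε / 2)) := by ring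
            rw [e3, rpow_add hl, rpow_one, e4]
            ring
        _ ≤ π * (64 * τ ^ (2 * (3 / 8 - ε)) * s ^ (2 * (ε / 2 - 1)) * K2) := by
            rw [← Finset.mul_sum]
            gcongr
            exact aux_sum _ (by linarith) n
        _ = _ := by ring
    have h := aux_time _ (√(π * 64 * K2) * τ ^ (3 / 8 - ε)) (ε / 2) (i * τ) T (by positivity) (by linarith) ht0 htT
      (fun s _ => intervalIntegral.integral_nonneg hp.le fun y _ => abs_nonneg _) hb
    refine h.trans ?_
    have h0 : 0 ≤ τ ^ (3 / 8 - ε) := by positivity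
    have h1 : 0 ≤ 64 * K1 * (T ^ (ε / 2) / (ε / 2)) := by positivity
    nlinarith
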